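/- arXiv:1205.6530 — 2 statements merged into one kernel-verified Lean document; each statement's English description precedes it below -/
import Mathlib

section
/- Let 0 < A ≤ B < ∞. If for a.e. σ ∈ 𝕋^r the family {g_i(σ) : i ∈ I} is a Riesz family in H with constants A and B, then the family {f_{i,m} : i ∈ I, m ∈ ℤ^r} is a Riesz family in L²(𝕋^r, H) with the same constants A and B. -/
open MeasureTheory
open scoped ENNReal NNReal

noncomputable section

/-- The unit cube `[0,1)^r` in `ℝ^r`. -/
def cube (r : ℕ) : Set (Fin r → ℝ) := Set.univ.pi fun _ => Set.Ico (0 : ℝ) 1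

/-- Lebesgue measure on the torus `𝕋^r`, identified with the cube `[0,1)^r`. -/
def torusMeasure (r : ℕ) : Measure (Fin r → ℝ) := volume.restrict (cube r)

/-- The character `e_m(σ) = exp(2πi⟨m,σ⟩)` on `𝕋^r`. -/
def char {r : ℕ} (m : Fin r → ℤ) (σ : Fin r → ℝ) : ℂ :=
  Complex.exp (2 * (Real.pi : ℂ) * Complex.I * ∑ j, (m j : ℂ) * (σ j : ℂ))

theorem aux_int_one (k : ℤ) :
    ∫ x in Set.Ico (0 : ℝ) 1, Complex.exp (2 * (Real.pi : ℂ) * Complex.I * ((k : ℂ) * (x : ℂ)))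
      = if k = 0 then 1 else 0 := by
  rw [integral_Ico_eq_integral_Ioc, ← intervalIntegral.integral_of_le zero_le_one]
  split_ifs with h
  · simp [h]
  · have hc : (2 * (Real.pi : ℂ) * Complex.I * (k : ℂ)) ≠ 0 := by
      simp [h, Real.pi_ne_zero]
    simp_rw [← mul_assoc]
    rw [integral_exp_mul_complex hc]
    have : Complex.exp (2 * (Real.pi : ℂ) * Complex.I * (k : ℂ)) = 1 := by
      rw [Complex.exp_eq_one_iff]
      exact ⟨k, by ring⟩
    simp [this]

theorem aux_int_char {r : ℕ} (m : Fin r → ℤ) :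
    ∫ σ, char m σ ∂(torusMeasure r) = if m = 0 then 1 else 0 := by
  unfold torusMeasure cube char
  rw [volume_pi, Measure.restrict_pi_pi]
  simp_rw [Finset.mul_sum, Complex.exp_sum]
  rw [integral_fintype_prod_eq_prod (fun (j : Fin r) (x : ℝ) =>
    Complex.exp (2 * (Real.pi : ℂ) * Complex.I * ((m j : ℂ) * (x : ℂ))))]
  simp_rw [aux_int_one]
  split_ifs with h
  · simp [h]
  · obtain ⟨j, hj⟩ := Function.ne_iff.mp h
    exact Finset.prod_eq_zero (Finset.mem_univ j) (if_neg hj)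

theorem aux_char_mul {r : ℕ} (m n : Fin r → ℤ) (σ : Fin r → ℝ) :
    char m σ * (starRingEnd ℂ) (char n σ) = char (m - n) σ := by
  unfold char
  rw [← Complex.exp_conj, ← Complex.exp_add]
  congr 1
  simp only [map_mul, map_sum, Complex.conj_ofReal, Complex.conj_I, map_intCast, map_ofNat,
    Pi.sub_apply, Int.cast_sub, sub_mul, Finset.sum_sub_distrib]
  ring

theorem aux_char_cont {r : ℕ} (m : Fin r → ℤ) : Continuous (char m) := by
  unfold char
  fun_prop

theorem aux_finite (r : ℕ) : IsFiniteMeasure (torusMeasure r) := by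
  unfold torusMeasure cube
  rw [volume_pi, Measure.restrict_pi_pi]
  infer_instance

theorem aux_char_norm {r : ℕ} (m : Fin r → ℤ) (σ : Fin r → ℝ) : ‖char m σ‖ = 1 := by
  have h := aux_char_mul m m σ
  rw [Complex.mul_conj', sub_self] at h
  have h2 : char (0 : Fin r → ℤ) σ = 1 := by simp [char]
  rw [h2] at h
  have h3 : ‖char m σ‖ ^ 2 = 1 := by exact_mod_cast h
  nlinarith [norm_nonneg (char m σ)]

theorem aux_char_integrable {r : ℕ} (m : Fin r → ℤ) : Integrable (char m) (torusMeasure r) := by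
  haveI := aux_finite r
  exact Integrable.of_bound (aux_char_cont m).aestronglyMeasurable 1
    (Filter.Eventually.of_forall fun σ => (aux_char_norm m σ).le)

theorem aux_expand {r : ℕ} (M : Finset (Fin r → ℤ)) (b : (Fin r → ℤ) → ℂ) (σ : Fin r → ℝ) :
    ((‖∑ m ∈ M, b m * char m σ‖ ^ 2 : ℝ) : ℂ) =
      ∑ m ∈ M, ∑ n ∈ M, (b m * (starRingEnd ℂ) (b n)) * char (m - n) σ := by
  push_cast
  rw [← Complex.mul_conj', map_sum, Finset.sum_mul_sum]
  refine Finset.sum_congr rfl fun m _ => Finset.sum_congr rfl fun n _ => ?_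
  rw [← aux_char_mul, map_mul]
  ring

theorem aux_parseval_integrable {r : ℕ} (M : Finset (Fin r → ℤ)) (b : (Fin r → ℤ) → ℂ) :
    Integrable (fun σ => ‖∑ m ∈ M, b m * char m σ‖ ^ 2) (torusMeasure r) := by
  have : Integrable (fun σ => ((‖∑ m ∈ M, b m * char m σ‖ ^ 2 : ℝ) : ℂ)) (torusMeasure r) := by
    simp_rw [aux_expand]
    exact integrable_finsetSum _ fun m _ => integrable_finsetSum _ fun n _ =>
      (aux_char_integrable _).const_mul _
  exact this.re

theorem aux_parseval {r : ℕ} (M : Finset (Fin r → ℤ)) (b : (Fin r → ℤ) → ℂ) :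
    ∫ σ, ‖∑ m ∈ M, b m * char m σ‖ ^ 2 ∂(torusMeasure r) = ∑ m ∈ M, ‖b m‖ ^ 2 := by
  have h : ((∫ σ, ‖∑ m ∈ M, b m * char m σ‖ ^ 2 ∂(torusMeasure r) : ℝ) : ℂ)
      = ((∑ m ∈ M, ‖b m‖ ^ 2 : ℝ) : ℂ) := by
    rw [← integral_complex_ofReal]
    simp_rw [aux_expand]
    rw [integral_finsetSum _ fun m _ => integrable_finsetSum _ fun n _ =>
      (aux_char_integrable _).const_mul _]
    push_cast
    refine Finset.sum_congr rfl fun m hm => ?_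
    rw [integral_finsetSum _ fun n _ => (aux_char_integrable _).const_mul _]
    simp_rw [integral_const_mul, aux_int_char, sub_eq_zero]
    simp [hm, Complex.mul_conj']
  exact_mod_cast h

theorem aux_norm_sq {r : ℕ} {H : Type} [NormedAddCommGroup H] [InnerProductSpace ℂ H]
    (F : Lp H 2 (torusMeasure r)) :
    ‖F‖ ^ 2 = ∫ σ, ‖F σ‖ ^ 2 ∂(torusMeasure r) := by
  have h : ((‖F‖ ^ 2 : ℝ) : ℂ) = ((∫ σ, ‖F σ‖ ^ 2 ∂(torusMeasure r) : ℝ) : ℂ) := by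
    rw [← integral_complex_ofReal]
    push_cast
    have := inner_self_eq_norm_sq_to_K (𝕜 := ℂ) F
    rw [L2.inner_def] at this
    simp_rw [inner_self_eq_norm_sq_to_K] at this
    exact this.symm
  exact_mod_cast h

/-- If for a.e. `σ` the family `{g_i(σ)}` is a Riesz family in `H` with constants `A, B`, then
the family `{f_{i,m}}`, `f_{i,m}(σ) = e_m(σ) g_i(σ)`, is a Riesz family in `L²(𝕋^r, H)` with
the same constants. -/
theorem riesz_of_ae_riesz (r : ℕ) (hr : 0 < r)
    {H : Type} [NormedAddCommGroup H] [InnerProductSpace ℂ H] [CompleteSpace H]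
    [TopologicalSpace.SeparableSpace H]
    {I : Type} [Countable I]
    (g : I → Lp H 2 (torusMeasure r))
    (f : I × (Fin r → ℤ) → Lp H 2 (torusMeasure r))
    (hf : ∀ (i : I) (m : Fin r → ℤ),
      ⇑(f (i, m)) =ᵐ[torusMeasure r] fun σ => char m σ • ⇑(g i) σ)
    (A B : ℝ) (hA : 0 < A) (hAB : A ≤ B)
    (hae : ∀ᵐ σ ∂(torusMeasure r), ∀ (t : Finset I) (c : I → ℂ),
      A * ∑ i ∈ t, ‖c i‖ ^ 2 ≤ ‖∑ i ∈ t, c i • ⇑(g i) σ‖ ^ 2 ∧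
      ‖∑ i ∈ t, c i • ⇑(g i) σ‖ ^ 2 ≤ B * ∑ i ∈ t, ‖c i‖ ^ 2) :
    ∀ (s : Finset (I × (Fin r → ℤ))) (a : I × (Fin r → ℤ) → ℂ),
      A * ∑ p ∈ s, ‖a p‖ ^ 2 ≤ ‖∑ p ∈ s, a p • f p‖ ^ 2 ∧
      ‖∑ p ∈ s, a p • f p‖ ^ 2 ≤ B * ∑ p ∈ s, ‖a p‖ ^ 2 := by
  classical
  intro s a
  set t := s.image Prod.fst with ht
  set M := s.image Prod.snd with hM
  set b : I → (Fin r → ℤ) → ℂ := fun i m => if (i, m) ∈ s then a (i, m) else 0 with hb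
  have hsub : s ⊆ t ×ˢ M := fun p hp => Finset.mem_product.2
    ⟨Finset.mem_image_of_mem _ hp, Finset.mem_image_of_mem _ hp⟩
  have hsum : ∑ p ∈ s, ‖a p‖ ^ 2 = ∑ i ∈ t, ∑ m ∈ M, ‖b i m‖ ^ 2 := by
    rw [← Finset.sum_product' t M (fun i m => ‖b i m‖ ^ 2)]
    rw [← Finset.sum_subset hsub (fun p _ hp => by simp [hb, hp])]
    exact Finset.sum_congr rfl fun p hp => by simp [hb, hp]
  set F := ∑ p ∈ s, a p • f p with hF
  have hFae : ∀ᵐ σ ∂(torusMeasure r),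
      F σ = ∑ i ∈ t, (∑ m ∈ M, b i m * char m σ) • (g i) σ := by
    have h1 := Lp.coeFn_fun_finsetSum s (fun p => a p • f p)
    have h2 : ∀ᵐ σ ∂(torusMeasure r), ∀ p ∈ s, (a p • f p : Lp H 2 (torusMeasure r)) σ
        = (a p * char p.2 σ) • (g p.1) σ := by
      rw [Filter.eventually_all_finset]
      intro p _
      filter_upwards [Lp.coeFn_smul (a p) (f p), hf p.1 p.2] with σ h3 h4
      rw [h3, Pi.smul_apply, h4, smul_smul]
    filter_upwards [h1, h2] with σ h1 h2
    rw [h1, Finset.sum_congr rfl h2]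
    simp_rw [Finset.sum_smul]
    rw [← Finset.sum_product' t M (fun i m => (b i m * char m σ) • (g i) σ)]
    rw [← Finset.sum_subset hsub (fun p _ hp => by simp [hb, hp])]
    exact Finset.sum_congr rfl fun p hp => by simp [hb, hp]
  have hint : Integrable (fun σ => ∑ i ∈ t, ‖∑ m ∈ M, b i m * char m σ‖ ^ 2)
      (torusMeasure r) := integrable_finsetSum _ fun i _ => aux_parseval_integrable _ _
  have hval : ∫ σ, ∑ i ∈ t, ‖∑ m ∈ M, b i m * char m σ‖ ^ 2 ∂(torusMeasure r)
      = ∑ p ∈ s, ‖a p‖ ^ 2 := by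
    rw [hsum, integral_finsetSum _ fun i _ => aux_parseval_integrable _ _]
    exact Finset.sum_congr rfl fun i _ => aux_parseval _ _
  have hFint : Integrable (fun σ => ‖F σ‖ ^ 2) (torusMeasure r) :=
    (memLp_two_iff_integrable_sq_norm (Lp.aestronglyMeasurable F)).1 (Lp.memLp F)
  rw [aux_norm_sq, ← hval, ← integral_const_mul, ← integral_const_mul]
  constructor
  · refine integral_mono_ae (hint.const_mul _) hFint ?_
    filter_upwards [hFae, hae] with σ h1 h2
    rw [h1]
    exact (h2 t fun i => ∑ m ∈ M, b i m * char m σ).1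
  · refine integral_mono_ae hFint (hint.const_mul _) ?_
    filter_upwards [hFae, hae] with σ h1 h2
    rw [h1]
    exact (h2 t fun i => ∑ m ∈ M, b i m * char m σ).2
end
end

section
/- Let 0 < A ≤ B < ∞. Suppose that for every finite subset F ⊆ I and every family of trigonometric polynomials (P_i)_{i∈F} (i.e., finite linear combinations of the characters e_m, m ∈ ℤ^r) the inequalities A ∫_{𝕋^r} Σ_{i∈F} |P_i(σ)|² dσ ≤ ∫_{𝕋^r} ‖Σ_{i∈F} P_i(σ) g_i(σ)‖²_H dσ ≤ B ∫_{𝕋^r} Σ_{i∈F} |P_i(σ)|² dσ hold. Then for every finite subset F ⊆ I and every family of bounded measurable functions m_i : 𝕋^r → ℂ (i ∈ F), the inequalities A ∫_{𝕋^r} Σ_{i∈F} |m_i(σ)|² dσ ≤ ∫_{𝕋^r} ‖Σ_{i∈F} m_i(σ) g_i(σ)‖²_H dσ ≤ B ∫_{𝕋^r} Σ_{i∈F} |m_i(σ)|² dσ hold. -/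
open MeasureTheory
open scoped ENNReal NNReal

noncomputable section

lemma aux_sq {α E : Type*} [MeasurableSpace α] [NormedAddCommGroup E] (μ : Measure α)
    (f : α → E) : eLpNorm f 2 μ ^ 2 = ∫⁻ x, (‖f x‖₊ : ℝ≥0∞) ^ 2 ∂μ := by
  have := eLpNorm_nnreal_pow_eq_lintegral (f := f) (μ := μ) (p := 2) (by norm_num)
  simpa [enorm] using this

lemma aux_tendsto {α E : Type*} [MeasurableSpace α] [NormedAddCommGroup E] {μ : Measure α}
    {f : ℕ → α → E} {f0 : α → E} (hf : ∀ n, AEStronglyMeasurable (f n) μ)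
    (h0 : AEStronglyMeasurable f0 μ) (hfin : eLpNorm f0 2 μ ≠ ∞)
    (h : Filter.Tendsto (fun n => eLpNorm (f n - f0) 2 μ) Filter.atTop (nhds 0)) :
    Filter.Tendsto (fun n => eLpNorm (f n) 2 μ) Filter.atTop (nhds (eLpNorm f0 2 μ)) := by
  rw [ENNReal.tendsto_nhds hfin]
  intro ε hε
  filter_upwards [ENNReal.tendsto_nhds_zero.1 h ε hε] with n hn
  constructor
  · rw [tsub_le_iff_right]
    calc eLpNorm f0 2 μ = eLpNorm (f n - (f n - f0)) 2 μ := by simp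
      _ ≤ eLpNorm (f n) 2 μ + eLpNorm (f n - f0) 2 μ :=
        eLpNorm_sub_le (hf n) ((hf n).sub h0) (by norm_num)
      _ ≤ _ := by gcongr
  · calc eLpNorm (f n) 2 μ = eLpNorm (f0 + (f n - f0)) 2 μ := by simp
      _ ≤ eLpNorm f0 2 μ + eLpNorm (f n - f0) 2 μ :=
        eLpNorm_add_le h0 ((hf n).sub h0) (by norm_num)
      _ ≤ _ := by gcongr

lemma aux_char {r : ℕ} (m : Fin r → ℤ) (σ : Fin r → ℝ) :
    UnitAddTorus.mFourier m (fun j => ((σ j : ℝ) : UnitAddCircle)) = char m σ := by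
  simp only [UnitAddTorus.mFourier, ContinuousMap.coe_mk, fourier_coe_apply, char,
    ← Complex.exp_sum, Finset.mul_sum]
  congr 1
  refine Finset.sum_congr rfl fun j _ => ?_
  simp
  ring

lemma aux_poly_meas {r : ℕ} (c : (Fin r → ℤ) →₀ ℂ) :
    Continuous (fun σ => c.sum fun m z => z * char m σ) := by
  unfold Finsupp.sum char
  fun_prop

lemma aux_approx {r : ℕ} (ν : Measure (Fin r → ℝ)) [IsFiniteMeasure ν]
    (hν : ∀ᵐ σ ∂ν, σ ∈ cube r) (w : (Fin r → ℝ) → ℂ) (hw : Measurable w)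
    (C : ℝ) (hC : ∀ σ, ‖w σ‖ ≤ C) (ε : ℝ≥0∞) (hε : 0 < ε) :
    ∃ c : (Fin r → ℤ) →₀ ℂ,
      eLpNorm ((fun σ => c.sum fun m z => z * char m σ) - w) 2 ν < ε := by
  let q : (Fin r → ℝ) → UnitAddTorus (Fin r) := fun σ j => ((σ j : ℝ) : UnitAddCircle)
  have hq : Measurable q := by
    refine measurable_pi_lambda _ fun j => ?_
    exact AddCircle.measurable_mk'.comp (measurable_pi_apply j)
  let s : UnitAddTorus (Fin r) → (Fin r → ℝ) := fun t j =>
    (AddCircle.measurableEquivIco 1 0 (t j) : ℝ)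
  have hs : Measurable s := by
    refine measurable_pi_lambda _ fun j => ?_
    exact measurable_subtype_coe.comp
      ((AddCircle.measurableEquivIco 1 0).measurable.comp (measurable_pi_apply j))
  have hsq : ∀ σ ∈ cube r, s (q σ) = σ := by
    intro σ hσ
    funext j
    have hj : σ j ∈ Set.Ico (0 : ℝ) (0 + 1) := by
      simpa using hσ j (Set.mem_univ j)
    change ((AddCircle.equivIco 1 0 ((σ j : ℝ) : AddCircle (1 : ℝ)) : ℝ)) = σ j
    rw [AddCircle.equivIco_coe_eq hj]
  let ν' := ν.map q
  have : IsFiniteMeasure ν' := Measure.isFiniteMeasure_map ν q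
  have hv : MemLp (w ∘ s) 2 ν' :=
    MemLp.of_bound (hw.comp hs).aestronglyMeasurable C (Filter.Eventually.of_forall fun t => hC _)
  have hD : Dense ((Submodule.span ℂ (Set.range (UnitAddTorus.mFourier (d := Fin r))) :
      Submodule ℂ C(UnitAddTorus (Fin r), ℂ)) : Set C(UnitAddTorus (Fin r), ℂ)) := by
    rw [Submodule.dense_iff_topologicalClosure_eq_top]
    exact UnitAddTorus.span_mFourier_closure_eq_top
  have hD2 := (ContinuousMap.toLp_denseRange ℂ ν' ℂ (p := 2) (by norm_num)).dense_image
    (ContinuousLinearMap.continuous _) hD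
  obtain ⟨_, ⟨p, hp, rfl⟩, hlt⟩ := EMetric.mem_closure_iff.1 (hD2 (hv.toLp _)) ε hε
  obtain ⟨c, rfl⟩ := Finsupp.mem_span_range_iff_exists_finsupp.1 hp
  refine ⟨c, ?_⟩
  set p := c.sum fun i a => a • UnitAddTorus.mFourier (d := Fin r) i with hpdef
  rw [edist_comm, Lp.edist_def] at hlt
  have e1 : eLpNorm (⇑(ContinuousMap.toLp 2 ν' ℂ p) - ⇑(hv.toLp (w ∘ s))) 2 ν'
      = eLpNorm (⇑p - w ∘ s) 2 ν' :=
    eLpNorm_congr_ae ((ContinuousMap.coeFn_toLp ν' p).sub hv.coeFn_toLp)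
  rw [e1, eLpNorm_map_measure (p.continuous.aestronglyMeasurable.sub hv.1) hq.aemeasurable] at hlt
  refine lt_of_eq_of_lt (eLpNorm_congr_ae ?_) hlt
  filter_upwards [hν] with σ hσ
  simp only [Pi.sub_apply, Function.comp_apply, hsq σ hσ, hpdef]
  congr 1
  simp only [Finsupp.sum, ContinuousMap.coe_sum, Finset.sum_apply, ContinuousMap.coe_smul,
    Pi.smul_apply, smul_eq_mul]
  exact Finset.sum_congr rfl fun m _ => by rw [← aux_char]

/-- If the two-sided inequalities hold for all finite families of trigonometric polynomials,
then they hold for all finite families of bounded measurable functions. -/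
theorem riesz_polynomials_to_bounded_measurable (r : ℕ) (hr : 0 < r)
    {H : Type} [NormedAddCommGroup H] [InnerProductSpace ℂ H] [CompleteSpace H]
    [TopologicalSpace.SeparableSpace H]
    {I : Type} [Countable I]
    (g : I → Lp H 2 (torusMeasure r))
    (A B : ℝ) (hA : 0 < A) (hAB : A ≤ B)
    (hpoly : ∀ (F : Finset I) (c : I → ((Fin r → ℤ) →₀ ℂ)),
      ENNReal.ofReal A *
          ∫⁻ σ, (∑ i ∈ F,
            (‖(c i).sum fun m z => z * char m σ‖₊ : ℝ≥0∞) ^ 2) ∂(torusMeasure r) ≤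
        ∫⁻ σ, (‖∑ i ∈ F, ((c i).sum fun m z => z * char m σ) • ⇑(g i) σ‖₊ : ℝ≥0∞) ^ 2
          ∂(torusMeasure r) ∧
      ∫⁻ σ, (‖∑ i ∈ F, ((c i).sum fun m z => z * char m σ) • ⇑(g i) σ‖₊ : ℝ≥0∞) ^ 2
          ∂(torusMeasure r) ≤
        ENNReal.ofReal B *
          ∫⁻ σ, (∑ i ∈ F,
            (‖(c i).sum fun m z => z * char m σ‖₊ : ℝ≥0∞) ^ 2) ∂(torusMeasure r)) :
    ∀ (F : Finset I) (w : I → (Fin r → ℝ) → ℂ),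
      (∀ i ∈ F, Measurable (w i)) →
      (∀ i ∈ F, ∃ C : ℝ, ∀ σ, ‖w i σ‖ ≤ C) →
      ENNReal.ofReal A *
          ∫⁻ σ, (∑ i ∈ F, (‖w i σ‖₊ : ℝ≥0∞) ^ 2) ∂(torusMeasure r) ≤
        ∫⁻ σ, (‖∑ i ∈ F, w i σ • ⇑(g i) σ‖₊ : ℝ≥0∞) ^ 2 ∂(torusMeasure r) ∧
      ∫⁻ σ, (‖∑ i ∈ F, w i σ • ⇑(g i) σ‖₊ : ℝ≥0∞) ^ 2 ∂(torusMeasure r) ≤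
        ENNReal.ofReal B *
          ∫⁻ σ, (∑ i ∈ F, (‖w i σ‖₊ : ℝ≥0∞) ^ 2) ∂(torusMeasure r) := by
  intro F w hwm hwb
  have : IsFiniteMeasure (torusMeasure r) := by
    refine ⟨?_⟩
    rw [torusMeasure, Measure.restrict_apply_univ, cube, Real.volume_pi_Ico]
    exact ENNReal.prod_lt_top fun i _ => by simp
  have hcube : ∀ᵐ σ ∂(torusMeasure r), σ ∈ cube r :=
    ae_restrict_mem (MeasurableSet.univ_pi fun _ => measurableSet_Ico)
  let ρ : (Fin r → ℝ) → ℝ≥0∞ := fun σ => 1 + ∑ i ∈ F, (‖g i σ‖₊ : ℝ≥0∞) ^ 2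
  have hgm : ∀ i, StronglyMeasurable (g i) := fun i => Lp.stronglyMeasurable (g i)
  have hgm2 : ∀ i, Measurable fun σ => (‖g i σ‖₊ : ℝ≥0∞) ^ 2 := fun i =>
    ((hgm i).enorm).pow_const 2
  have hρm : Measurable ρ := measurable_const.add (Finset.measurable_sum _ fun i _ => hgm2 i)
  have hρfin : ∫⁻ σ, ρ σ ∂(torusMeasure r) ≠ ∞ := by
    rw [lintegral_add_left measurable_const, lintegral_finsetSum _ fun i _ => hgm2 i]
    refine ENNReal.add_ne_top.2 ⟨by simp, ?_⟩
    refine ENNReal.sum_ne_top.2 fun i _ => ?_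
    rw [← aux_sq]
    exact ENNReal.pow_ne_top (Lp.eLpNorm_ne_top (g i))
  let ν := (torusMeasure r).withDensity ρ
  have : IsFiniteMeasure ν := isFiniteMeasure_withDensity hρfin
  have hνc : ∀ᵐ σ ∂ν, σ ∈ cube r := (withDensity_absolutelyContinuous (torusMeasure r) ρ).ae_le hcube
  have key : ∀ i, ∀ n : ℕ, ∃ c : (Fin r → ℤ) →₀ ℂ, i ∈ F →
      eLpNorm ((fun σ => c.sum fun m z => z * char m σ) - w i) 2 ν < ((n : ℝ≥0∞) + 1)⁻¹ := by
    intro i n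
    by_cases hi : i ∈ F
    · obtain ⟨C, hC⟩ := hwb i hi
      obtain ⟨c, hc⟩ := aux_approx ν hνc (w i) (hwm i hi) C hC ((n : ℝ≥0∞) + 1)⁻¹ (by simp)
      exact ⟨c, fun _ => hc⟩
    · exact ⟨0, fun h => absurd h hi⟩
  choose c hc using key
  let P : I → ℕ → (Fin r → ℝ) → ℂ := fun i n σ => (c i n).sum fun m z => z * char m σ
  have hPm : ∀ i n, Continuous (P i n) := fun i n => aux_poly_meas _
  have hinv : Filter.Tendsto (fun n : ℕ => ((n : ℝ≥0∞) + 1)⁻¹) Filter.atTop (nhds 0) := by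
    have := (Filter.tendsto_add_atTop_iff_nat 1).2 ENNReal.tendsto_inv_nat_nhds_zero
    simpa using this
  have hν0 : ∀ i ∈ F, Filter.Tendsto (fun n => eLpNorm (P i n - w i) 2 ν) Filter.atTop (nhds 0) :=
    fun i hi => tendsto_of_tendsto_of_tendsto_of_le_of_le tendsto_const_nhds hinv
      (fun _ => zero_le) (fun n => (hc i n hi).le)
  have hsqν : ∀ f : (Fin r → ℝ) → ℂ, Measurable f →
      eLpNorm f 2 ν ^ 2 = ∫⁻ σ, ρ σ * (‖f σ‖₊ : ℝ≥0∞) ^ 2 ∂(torusMeasure r) := by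
    intro f hf
    rw [aux_sq, lintegral_withDensity_eq_lintegral_mul _ hρm
      (g := fun σ => (‖f σ‖₊ : ℝ≥0∞) ^ 2) (hf.enorm.pow_const 2)]
    rfl
  have hle1 : ∀ f : (Fin r → ℝ) → ℂ, Measurable f → eLpNorm f 2 (torusMeasure r) ≤ eLpNorm f 2 ν := by
    intro f hf
    rw [← ENNReal.pow_le_pow_left_iff two_ne_zero, aux_sq, hsqν f hf]
    refine lintegral_mono fun σ => ?_
    exact le_mul_of_one_le_left zero_le le_self_add
  have hle2 : ∀ i ∈ F, ∀ f : (Fin r → ℝ) → ℂ, Measurable f →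
      eLpNorm (fun σ => f σ • g i σ) 2 (torusMeasure r) ≤ eLpNorm f 2 ν := by
    intro i hi f hf
    rw [← ENNReal.pow_le_pow_left_iff two_ne_zero, aux_sq, hsqν f hf]
    refine lintegral_mono fun σ => ?_
    simp only [nnnorm_smul, ENNReal.coe_mul, mul_pow]
    rw [mul_comm]
    gcongr
    exact (Finset.single_le_sum (f := fun i => (‖g i σ‖₊ : ℝ≥0∞) ^ 2)
      (fun _ _ => zero_le) hi).trans le_add_self
  have hwLp : ∀ i ∈ F, MemLp (w i) 2 ν := fun i hi => by
    obtain ⟨C, hC⟩ := hwb i hi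
    exact MemLp.of_bound (hwm i hi).aestronglyMeasurable C (Filter.Eventually.of_forall hC)
  have t1 : ∀ i ∈ F, Filter.Tendsto (fun n => eLpNorm (P i n) 2 (torusMeasure r)) Filter.atTop
      (nhds (eLpNorm (w i) 2 (torusMeasure r))) := by
    intro i hi
    refine aux_tendsto (fun n => (hPm i n).aestronglyMeasurable) (hwm i hi).aestronglyMeasurable
      ((hle1 _ (hwm i hi)).trans_lt (hwLp i hi).2).ne ?_
    exact tendsto_of_tendsto_of_tendsto_of_le_of_le tendsto_const_nhds (hν0 i hi)
      (fun _ => zero_le) (fun n => hle1 _ ((hPm i n).measurable.sub (hwm i hi)))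
  have hwg : ∀ i ∈ F, AEStronglyMeasurable (fun σ => w i σ • g i σ) (torusMeasure r) := fun i hi =>
    (hwm i hi).aestronglyMeasurable.smul (hgm i).aestronglyMeasurable
  have hPg : ∀ i n, AEStronglyMeasurable (fun σ => P i n σ • g i σ) (torusMeasure r) := fun i n =>
    (hPm i n).aestronglyMeasurable.smul (hgm i).aestronglyMeasurable
  have t2 : Filter.Tendsto (fun n => eLpNorm (fun σ => ∑ i ∈ F, P i n σ • g i σ) 2 (torusMeasure r)) Filter.atTop
      (nhds (eLpNorm (fun σ => ∑ i ∈ F, w i σ • g i σ) 2 (torusMeasure r))) := by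
    refine aux_tendsto (fun n => Finset.aestronglyMeasurable_fun_sum _ fun i _ => hPg i n)
      (Finset.aestronglyMeasurable_fun_sum _ hwg) ?_ ?_
    · exact (memLp_finsetSum (f := fun i σ => w i σ • g i σ) F fun i hi => ⟨hwg i hi,
        (hle2 i hi _ (hwm i hi)).trans_lt (hwLp i hi).2⟩).2.ne
    · have hs : Filter.Tendsto (fun n => ∑ i ∈ F, eLpNorm (P i n - w i) 2 ν) Filter.atTop
          (nhds 0) := by
        simpa using tendsto_finsetSum F hν0
      refine tendsto_of_tendsto_of_tendsto_of_le_of_le tendsto_const_nhds hs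
        (fun _ => zero_le) (fun n => ?_)
      have e : ((fun σ => ∑ i ∈ F, P i n σ • g i σ) - fun σ => ∑ i ∈ F, w i σ • g i σ)
          = ∑ i ∈ F, fun σ => (P i n - w i) σ • g i σ := by
        funext σ
        simp [Finset.sum_apply, sub_smul, Finset.sum_sub_distrib]
      simp only [e]
      refine (eLpNorm_sum_le (fun i hi => ?_) (by norm_num)).trans
        (Finset.sum_le_sum fun i hi => hle2 i hi _ ((hPm i n).measurable.sub (hwm i hi)))
      exact ((hPm i n).measurable.sub (hwm i hi)).aestronglyMeasurable.smul
        (hgm i).aestronglyMeasurable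
  have hsum : ∀ u : I → (Fin r → ℝ) → ℂ, (∀ i ∈ F, Measurable (u i)) →
      ∫⁻ σ, (∑ i ∈ F, (‖u i σ‖₊ : ℝ≥0∞) ^ 2) ∂(torusMeasure r) = ∑ i ∈ F, eLpNorm (u i) 2 (torusMeasure r) ^ 2 := by
    intro u hu
    rw [lintegral_finsetSum' (f := fun i σ => (‖u i σ‖₊ : ℝ≥0∞) ^ 2) _ fun i hi => ((hu i hi).enorm.pow_const 2).aemeasurable]
    simp only [aux_sq]
  have T1 : Filter.Tendsto (fun n => ∑ i ∈ F, eLpNorm (P i n) 2 (torusMeasure r) ^ 2) Filter.atTop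
      (nhds (∑ i ∈ F, eLpNorm (w i) 2 (torusMeasure r) ^ 2)) :=
    tendsto_finsetSum F fun i hi => ENNReal.Tendsto.pow (t1 i hi)
  have T2 := ENNReal.Tendsto.pow (n := 2) t2
  have hmul : ∀ a : ℝ, Filter.Tendsto
      (fun n => ENNReal.ofReal a * ∑ i ∈ F, eLpNorm (P i n) 2 (torusMeasure r) ^ 2) Filter.atTop
      (nhds (ENNReal.ofReal a * ∑ i ∈ F, eLpNorm (w i) 2 (torusMeasure r) ^ 2)) := fun a =>
    ENNReal.Tendsto.const_mul T1 (Or.inr ENNReal.ofReal_ne_top)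
  have hp : ∀ n, _ := fun n => hpoly F (fun i => c i n)
  have hsP : ∀ n, _ := fun n => hsum (fun i => P i n) (fun i _ => (hPm i n).measurable)
  rw [hsum w hwm, ← aux_sq]
  constructor
  · refine le_of_tendsto_of_tendsto' (hmul A) T2 fun n => ?_
    rw [← hsP n, aux_sq]
    exact (hp n).1
  · refine le_of_tendsto_of_tendsto' T2 (hmul B) fun n => ?_
    rw [← hsP n, aux_sq]
    exact (hp n).2
end
end
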